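/- Under Assumption 1, there exists a constant η₀ ∈ (0,1) depending only on m and L such that for every step size η ∈ (0, η₀), the PRLMC Markov chain (X̃_n)_{n≥0} admits a unique stationary distribution π_η, and its second moment satisfies ∫_{ℝ^d} |x|² π_η(dx) ≤ (d/m)·{2 + 4η²L²(2 − 1/K) + L²(1 − 1/K)}. -/

import Mathlib

open MeasureTheory ProbabilityTheory Filter
open scoped ENNReal NNReal RealInnerProductSpace Topology BigOperators

noncomputable section

/-- Euclidean space `ℝ^d`. -/
abbrev Euc (d : ℕ) : Type := EuclideanSpace ℝ (Fin d)

/-- Assumption 1: `U` is `C¹`, `m`-strongly convex and `L`-gradient Lipschitz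
(expressed through the two-sided quadratic bound), with `∇U(0) = 0`. -/
def StrongAssumption {d : ℕ} (U : Euc d → ℝ) (m L : ℝ) : Prop :=
  ContDiff ℝ 1 U ∧ 0 < m ∧ m ≤ L ∧
  (∀ x y : Euc d,
    m / 2 * ‖x - y‖ ^ 2 ≤ U y - U x - ⟪gradient U x, y - x⟫ ∧
    U y - U x - ⟪gradient U x, y - x⟫ ≤ L / 2 * ‖x - y‖ ^ 2) ∧
  gradient U 0 = 0

/-- Assumption 3: `U` is `C³` with third derivative uniformly bounded by `Lt`. -/
def ThirdDerivBounded {d : ℕ} (U : Euc d → ℝ) (Lt : ℝ) : Prop :=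
  ContDiff ℝ 3 U ∧ ∀ x : Euc d, ‖iteratedFDeriv ℝ 3 U x‖ ≤ Lt

/-- The standard Gaussian measure on `ℝ^d`. -/
def stdGaussian (d : ℕ) : Measure (Euc d) :=
  (Measure.pi fun _ : Fin d => ProbabilityTheory.gaussianReal 0 1).map
    ⇑(EuclideanSpace.equiv (Fin d) ℝ).symm

/-- Bernoulli(p) distribution on `ℝ`, giving mass `p` to `1` and `1-p` to `0`. -/
def bern (p : ℝ≥0∞) : Measure ℝ :=
  p • Measure.dirac (1 : ℝ) + (1 - p) • Measure.dirac (0 : ℝ)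

/-- The `i`-th PRLMC midpoint. -/
def prlmcMid {d : ℕ} (U : Euc d → ℝ) (η : ℝ) (K : ℕ) (x : Euc d)
    (g : Fin K → Euc d) (i : Fin K) : Euc d :=
  x - (((i : ℝ) * η / (K : ℝ)) • gradient U x) + Real.sqrt (2 * (i : ℝ) * η / (K : ℝ)) • g i

/-- One step of the PRLMC scheme with step size `η`, Bernoulli variables `h`,
midpoint Gaussians `g` and driving Gaussian `z`. -/
def prlmcStep {d : ℕ} (U : Euc d → ℝ) (η : ℝ) (K : ℕ) (x : Euc d)
    (h : Fin K → ℝ) (g : Fin K → Euc d) (z : Euc d) : Euc d :=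
  x - η • gradient U x
    + η • ∑ i : Fin K, h i • (gradient U x - gradient U (prlmcMid U η K x g i))
    + Real.sqrt (2 * η) • z

/-- The law of the randomness used at a single step of the PRLMC scheme:
`K` i.i.d. Bernoulli(1/K) variables, `K` i.i.d. standard Gaussians for the midpoints
and one standard Gaussian. -/
def prlmcNoise (d K : ℕ) : Measure ((Fin K → ℝ) × (Fin K → Euc d) × Euc d) :=
  (Measure.pi fun _ : Fin K => bern (K : ℝ≥0∞)⁻¹).prod
    ((Measure.pi fun _ : Fin K => stdGaussian d).prod (stdGaussian d))

/-- The one-step transition kernel `Q_η` of the PRLMC chain. -/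
def prlmcKernel {d : ℕ} (U : Euc d → ℝ) (η : ℝ) (K : ℕ) (x : Euc d) : Measure (Euc d) :=
  (prlmcNoise d K).map fun r => prlmcStep U η K x r.1 r.2.1 r.2.2

/-- The law of the PRLMC chain after `n` steps, started from the distribution `μ`. -/
def prlmcIter {d : ℕ} (U : Euc d → ℝ) (η : ℝ) (K : ℕ) (μ : Measure (Euc d)) :
    ℕ → Measure (Euc d)
  | 0 => μ
  | n + 1 => (prlmcIter U η K μ n).bind (prlmcKernel U η K)

/-- The law of the decreasing-step PRLMC chain after `n` steps (the `(k+1)`-th step uses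
step size `γ (k+1)`), started from the distribution `μ`. -/
def prlmcIterVar {d : ℕ} (U : Euc d → ℝ) (K : ℕ) (γ : ℕ → ℝ) (μ : Measure (Euc d)) :
    ℕ → Measure (Euc d)
  | 0 => μ
  | n + 1 => (prlmcIterVar U K γ μ n).bind (prlmcKernel U (γ (n + 1)) K)

/-- Total variation distance. -/
def dTV {d : ℕ} (μ ν : Measure (Euc d)) : ℝ≥0∞ :=
  ⨆ (A : Set (Euc d)) (_ : MeasurableSet A), max (μ A - ν A) (ν A - μ A)

/-- 2-Wasserstein distance. -/
def W2 {d : ℕ} (μ ν : Measure (Euc d)) : ℝ≥0∞ :=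
  ⨅ (π : Measure (Euc d × Euc d)) (_ : π.map Prod.fst = μ ∧ π.map Prod.snd = ν),
    (∫⁻ p, ((‖p.1 - p.2‖₊ : ℝ≥0∞)) ^ 2 ∂π) ^ (1 / 2 : ℝ)

/-- The Gibbs measure `π(dx) ∝ exp(-U(x)) dx`. -/
def gibbs {d : ℕ} (U : Euc d → ℝ) : Measure (Euc d) :=
  (∫⁻ x, ENNReal.ofReal (Real.exp (-U x)) ∂(volume : Measure (Euc d)))⁻¹ •
    (volume : Measure (Euc d)).withDensity fun x => ENNReal.ofReal (Real.exp (-U x))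

/-- Membership in the functional class `𝒢`: `C²` functions with bounded gradient and
bounded Hessian. -/
def MemG {d : ℕ} (h : Euc d → ℝ) : Prop :=
  ContDiff ℝ 2 h ∧ (∃ M, ∀ x, ‖gradient h x‖ ≤ M) ∧
    (∃ M, ∀ x, ‖iteratedFDeriv ℝ 2 h x‖ ≤ M)

/-- The distance `d_𝒢`. -/
def dG {d : ℕ} (μ ν : Measure (Euc d)) : ℝ :=
  sSup { r : ℝ | ∃ h : Euc d → ℝ, MemG h ∧ r = (∫ x, h x ∂μ) - ∫ x, h x ∂ν }

/-- `B` is a standard `d`-dimensional Brownian motion on `(Ω, P)`. -/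
def IsBrownianMotion {Ω : Type} [MeasurableSpace Ω] {d : ℕ} (P : Measure Ω)
    (B : ℝ → Ω → Euc d) : Prop :=
  (∀ t, Measurable (B t)) ∧
  (∀ᵐ ω ∂P, B 0 ω = 0 ∧ Continuous fun t => B t ω) ∧
  (∀ s t : ℝ, 0 ≤ s → s ≤ t →
    Measure.map (fun ω => B t ω - B s ω) P
      = Measure.map (fun z => Real.sqrt (t - s) • z) (stdGaussian d)) ∧
  (∀ τ : ℕ → ℝ, Monotone τ → 0 ≤ τ 0 →
    iIndepFun (fun i ω => B (τ (i + 1)) ω - B (τ i) ω) P)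

/-- `X` is a solution of the Langevin SDE `dX_t = -∇U(X_t) dt + √2 dB_t` started at `x`. -/
def SolvesLangevin {Ω : Type} [MeasurableSpace Ω] {d : ℕ} (U : Euc d → ℝ) (P : Measure Ω)
    (B X : ℝ → Ω → Euc d) (x : Euc d) : Prop :=
  (∀ t, Measurable (X t)) ∧
  ∀ᵐ ω ∂P, (Continuous fun t => X t ω) ∧ ∀ t, 0 ≤ t →
    X t ω = x - (∫ s in (0:ℝ)..t, gradient U (X s ω)) + Real.sqrt 2 • B t ω

/-- `κ = 2mL/(m+L)`. -/
def kap (m L : ℝ) : ℝ := 2 * m * L / (m + L)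

/-- Cumulative times `t_n = γ_1 + ⋯ + γ_n`. -/
def tseq (γ : ℕ → ℝ) (n : ℕ) : ℝ := ∑ k ∈ Finset.Icc 1 n, γ k

/-
A random map `x ↦ F x r` which contracts in `Lᵖ` under the synchronous coupling (same noise `r`
for both copies) has an invariant law: on `Lᵖ` functions of an i.i.d. noise sequence,
`g ↦ ((r₀, r₁, …) ↦ F (g (r₁, r₂, …)) r₀)` is a strict contraction, and its fixed point, read
backwards in time, is a stationary copy of the chain. The same coupling makes the kernel contract
Lipschitz test functions, which forces uniqueness. For PRLMC the `L²` contraction comes from strong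
convexity: the Bernoulli variables average to a uniformly chosen midpoint step, whose gradient
increments are controlled by `m` and `L`, up to a variance of order `η²L²`. Comparing the step from
`x` with the step from `0` then turns the contraction into the drift inequality
`E|X₁|² ≤ (1 - mη)|x|² + ηd(2 + L²(1 - 1/K))`, and integrating it against the invariant law bounds
the second moment.
-/

section RandomMap

variable {Ω Ω' E : Type*} [MeasurableSpace Ω] [MeasurableSpace Ω']

/-- The transition kernel of the Markov chain `x ↦ F x r`, with `r` drawn afresh from `P` at each
step. As with `Kernel.map`, it is `0` unless `F` is jointly measurable. -/
def randomMapKernel [MeasurableSpace E] (P : Measure Ω) [SFinite P] (F : E → Ω → E) :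
    Kernel E E :=
  (Kernel.id ×ₖ Kernel.const E P).map (Function.uncurry F)

lemma randomMapKernel_apply [MeasurableSpace E] {P : Measure Ω} [SFinite P] {F : E → Ω → E}
    (hF : Measurable (Function.uncurry F)) (x : E) : randomMapKernel P F x = P.map (F x) := by
  rw [randomMapKernel, Kernel.map_apply _ hF, Kernel.prod_apply, Kernel.id_apply,
    Kernel.const_apply, Measure.dirac_prod, Measure.map_map hF measurable_prodMk_left]
  rfl

lemma isMarkovKernel_randomMapKernel [MeasurableSpace E] {P : Measure Ω} [IsProbabilityMeasure P]
    {F : E → Ω → E} (hF : Measurable (Function.uncurry F)) :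
    IsMarkovKernel (randomMapKernel P F) :=
  Kernel.IsMarkovKernel.map _ hF

lemma bind_randomMapKernel [MeasurableSpace E] {P : Measure Ω} [SFinite P] {F : E → Ω → E}
    (hF : Measurable (Function.uncurry F)) (μ : Measure E) [SFinite μ] :
    μ.bind (randomMapKernel P F) = (P.prod μ).map fun q => F q.2 q.1 := by
  have hF' : Measurable fun q : Ω × E => F q.2 q.1 := hF.comp measurable_swap
  ext s hs
  rw [Measure.bind_apply hs (Kernel.aemeasurable _), Measure.map_apply hF' hs,
    Measure.prod_apply_symm (hF' hs)]
  refine lintegral_congr fun x => ?_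
  rw [randomMapKernel_apply hF, Measure.map_apply hF.of_uncurry_left hs]
  rfl

/-- The random map `F` contracts in `Lᵖ` with factor `ρ` when the copies started from `x` and `y`
and driven by the same noise are at `Lᵖ`-distance at most `ρ ‖x - y‖` after one step. -/
def ContractsInLp [NormedAddCommGroup E] (P : Measure Ω) (F : E → Ω → E) (p : ℝ≥0∞) (ρ : ℝ≥0) :
    Prop :=
  ∀ x y, eLpNorm (fun r => F x r - F y r) p P ≤ ρ * ‖x - y‖ₑ

lemma eLpNorm_prod_le_of_forall_eLpNorm_le {G H : Type*} [NormedAddCommGroup G]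
    [NormedAddCommGroup H] {P : Measure Ω} [SFinite P] {Q : Measure Ω'} [SFinite Q]
    {p : ℝ≥0∞} (hp : p ≠ ∞) {c : ℝ≥0} {f : Ω × Ω' → G}
    {g : Ω' → H} (hf : AEStronglyMeasurable f (P.prod Q))
    (h : ∀ b, eLpNorm (fun a => f (a, b)) p P ≤ c * ‖g b‖ₑ) :
    eLpNorm f p (P.prod Q) ≤ c * eLpNorm g p Q := by
  lift p to ℝ≥0 using hp
  rcases eq_or_ne p 0 with rfl | hp
  · simp
  have hp' : 0 < (p : ℝ) := by positivity
  rw [← ENNReal.rpow_le_rpow_iff hp', ENNReal.mul_rpow_of_nonneg _ _ hp'.le,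
    eLpNorm_nnreal_pow_eq_lintegral hp, eLpNorm_nnreal_pow_eq_lintegral hp,
    lintegral_prod_symm _ (hf.enorm.pow_const _),
    ← lintegral_const_mul' _ _ (ENNReal.rpow_ne_top_of_nonneg hp'.le ENNReal.coe_ne_top)]
  refine lintegral_mono fun b => ?_
  rw [← eLpNorm_nnreal_pow_eq_lintegral hp, ← ENNReal.mul_rpow_of_nonneg _ _ hp'.le]
  exact ENNReal.rpow_le_rpow (h b) hp'.le

variable [NormedAddCommGroup E] [MeasurableSpace E] [BorelSpace E] [SecondCountableTopology E]
  {P : Measure Ω} [IsProbabilityMeasure P] {F : E → Ω → E} {p : ℝ≥0∞} {ρ : ℝ≥0}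

namespace ContractsInLp

lemma eLpNorm_sub_le (h : ContractsInLp P F p ρ) (hF : Measurable (Function.uncurry F))
    (hp : p ≠ ∞) {Q : Measure Ω'} [SFinite Q] {Y Z : Ω' → E} (hY : AEStronglyMeasurable Y Q)
    (hZ : AEStronglyMeasurable Z Q) :
    eLpNorm (fun q : Ω × Ω' => F (Y q.2) q.1 - F (Z q.2) q.1) p (P.prod Q)
      ≤ ρ * eLpNorm (Y - Z) p Q := by
  have hmeas {W : Ω' → E} (hW : AEStronglyMeasurable W Q) :
      AEStronglyMeasurable (fun q : Ω × Ω' => F (W q.2) q.1) (P.prod Q) :=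
    (hF.comp_aemeasurable (hW.comp_snd.aemeasurable.prodMk
      measurable_fst.aemeasurable)).aestronglyMeasurable
  exact eLpNorm_prod_le_of_forall_eLpNorm_le hp (g := Y - Z)
    ((hmeas hY).sub (hmeas hZ)) fun b => h (Y b) (Z b)

lemma memLp_comp (h : ContractsInLp P F p ρ) (hF : Measurable (Function.uncurry F)) (hp : p ≠ ∞)
    {x₀ : E} (hx₀ : MemLp (F x₀) p P) {Q : Measure Ω'} [IsProbabilityMeasure Q] {Y : Ω' → E}
    (hY : MemLp Y p Q) : MemLp (fun q : Ω × Ω' => F (Y q.2) q.1) p (P.prod Q) := by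
  have hmeas : AEStronglyMeasurable (fun q : Ω × Ω' => F (Y q.2) q.1) (P.prod Q) :=
    (hF.comp_aemeasurable (hY.1.comp_snd.aemeasurable.prodMk
      measurable_fst.aemeasurable)).aestronglyMeasurable
  have hx₀' : MemLp (fun q : Ω × Ω' => F x₀ q.1) p (P.prod Q) := hx₀.comp_fst Q
  have hsub : MemLp (fun q : Ω × Ω' => F (Y q.2) q.1 - F x₀ q.1) p (P.prod Q) := by
    refine ⟨hmeas.sub hx₀'.1, (h.eLpNorm_sub_le hF hp hY.1 aestronglyMeasurable_const).trans_lt ?_⟩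
    exact ENNReal.mul_lt_top ENNReal.coe_lt_top (hY.sub (memLp_const x₀)).2
  exact (hsub.add hx₀').congr_norm hmeas (.of_forall fun q => by simp)

/-- A stationary variable `Y` driven by noise that splits as a fresh sample and an independent
copy of itself is a fixed point of `Y ↦ F (Y ∘ snd ∘ S) (fst ∘ S)`, a contraction of `Lᵖ`. -/
lemma exists_memLp_ae_eq_comp [CompleteSpace E] [Fact (1 ≤ p)] (h : ContractsInLp P F p ρ)
    (hF : Measurable (Function.uncurry F)) (hp : p ≠ ∞) (hρ : ρ < 1) {x₀ : E}
    (hx₀ : MemLp (F x₀) p P) {Q : Measure Ω'} [IsProbabilityMeasure Q] {S : Ω' → Ω × Ω'}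
    (hS : MeasurePreserving S Q (P.prod Q)) :
    ∃ Y : Ω' → E, Measurable Y ∧ MemLp Y p Q ∧
      Y =ᵐ[Q] fun ω => F (Y (S ω).2) (S ω).1 := by
  have hmem (Y : Lp E p Q) : MemLp (fun ω => F (Y (S ω).2) (S ω).1) p Q :=
    (h.memLp_comp hF hp hx₀ (Lp.memLp Y)).comp_measurePreserving hS
  let Φ (Y : Lp E p Q) : Lp E p Q := (hmem Y).toLp
  have hΦ : ContractingWith ρ Φ := by
    refine ⟨hρ, fun Y Z => ?_⟩
    have hmeas := ((h.memLp_comp hF hp hx₀ (Lp.memLp Y)).sub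
      (h.memLp_comp hF hp hx₀ (Lp.memLp Z))).1
    calc edist (Φ Y) (Φ Z)
        = eLpNorm ((fun q : Ω × Ω' => F (Y q.2) q.1 - F (Z q.2) q.1) ∘ S) p Q :=
          Lp.edist_toLp_toLp _ _ _ _
      _ = eLpNorm (fun q : Ω × Ω' => F (Y q.2) q.1 - F (Z q.2) q.1) p (P.prod Q) :=
          eLpNorm_comp_measurePreserving hmeas hS
      _ ≤ ρ * eLpNorm (⇑Y - ⇑Z) p Q := h.eLpNorm_sub_le hF hp (Lp.memLp Y).1 (Lp.memLp Z).1
      _ = ρ * edist Y Z := by rw [Lp.edist_def]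
  refine ⟨hΦ.fixedPoint, (Lp.stronglyMeasurable _).measurable, Lp.memLp _, ?_⟩
  have hfix : Φ hΦ.fixedPoint = hΦ.fixedPoint := hΦ.fixedPoint_isFixedPt
  conv_lhs => rw [← hfix]
  exact (hmem _).coeFn_toLp

end ContractsInLp

/-- Prepends an entry to a sequence: the inverse of splitting a noise sequence into its first entry
and its tail, along which the product law is transported. -/
def consSeq (q : Ω × (ℕ → Ω)) : ℕ → Ω
  | 0 => q.1
  | n + 1 => q.2 n

lemma measurable_consSeq : Measurable (consSeq (Ω := Ω)) :=
  measurable_pi_lambda _ fun n => by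
    cases n with
    | zero => exact measurable_fst
    | succ n => exact (measurable_pi_apply n).comp measurable_snd

lemma measurePreserving_consSeq (P : Measure Ω) [IsProbabilityMeasure P] :
    MeasurePreserving consSeq (P.prod (Measure.infinitePi fun _ => P))
      (Measure.infinitePi fun _ => P) := by
  refine ⟨measurable_consSeq, Measure.eq_infinitePi _ fun s t ht => ?_⟩
  classical
  let s' : Finset ℕ := s.preimage Nat.succ Nat.succ_injective.injOn
  let A : Set Ω := if 0 ∈ s then t 0 else Set.univ
  have hpre : consSeq ⁻¹' (s : Set ℕ).pi t = A ×ˢ (s' : Set ℕ).pi fun n => t (n + 1) := by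
    ext q
    simp only [Set.mem_preimage, Set.mem_pi, Set.mem_prod, A, s', Finset.mem_coe,
      Finset.mem_preimage]
    constructor
    · intro h
      refine ⟨?_, fun n hn => h (n + 1) hn⟩
      split_ifs with h0
      exacts [h 0 h0, trivial]
    · rintro ⟨h0, h⟩ (_ | n) hn
      · rwa [if_pos hn] at h0
      · exact h n hn
  rw [Measure.map_apply measurable_consSeq (.pi s.countable_toSet fun i _ => ht i), hpre,
    Measure.prod_prod, Measure.infinitePi_pi _ fun i _ => ht (i + 1)]
  have hs' : ∏ n ∈ s', P (t (n + 1)) = ∏ n ∈ s.erase 0, P (t n) := by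
    have : s' = (s.erase 0).preimage Nat.succ Nat.succ_injective.injOn := by ext; simp [s']
    rw [this]
    refine Finset.prod_preimage _ _ _ (fun n => P (t n)) fun n hn hn' => ?_
    exact absurd ⟨n - 1, Nat.succ_pred (Finset.ne_of_mem_erase hn)⟩ hn'
  rw [hs']
  by_cases h0 : 0 ∈ s
  · simp only [A, h0, if_true, Finset.mul_prod_erase s (fun n => P (t n)) h0]
  · simp only [A, h0, if_false, measure_univ, one_mul, Finset.erase_eq_of_notMem h0]

lemma measurePreserving_splitSeq (P : Measure Ω) [IsProbabilityMeasure P] :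
    MeasurePreserving (fun ω : ℕ → Ω => (ω 0, fun n => ω (n + 1)))
      (Measure.infinitePi fun _ => P) (P.prod (Measure.infinitePi fun _ => P)) := by
  refine ⟨by fun_prop, ?_⟩
  conv_lhs => rw [← (measurePreserving_consSeq P).map_eq]
  rw [Measure.map_map (by fun_prop) measurable_consSeq]
  exact Measure.map_id

theorem ContractsInLp.exists_invariant [CompleteSpace E] [Fact (1 ≤ p)]
    (h : ContractsInLp P F p ρ) (hF : Measurable (Function.uncurry F)) (hp : p ≠ ∞) (hρ : ρ < 1)
    {x₀ : E} (hx₀ : MemLp (F x₀) p P) :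
    ∃ μ : Measure E, IsProbabilityMeasure μ ∧ MemLp id p μ ∧
      (randomMapKernel P F).Invariant μ := by
  have hS := measurePreserving_splitSeq P
  obtain ⟨Y, hY, hYp, hfix⟩ := h.exists_memLp_ae_eq_comp hF hp hρ hx₀ hS
  set Q : Measure (ℕ → Ω) := Measure.infinitePi fun _ => P
  have hY' : Measurable fun q : Ω × (ℕ → Ω) => F (Y q.2) q.1 :=
    hF.comp ((hY.comp measurable_snd).prodMk measurable_fst)
  have hF' : Measurable fun q : Ω × E => F q.2 q.1 := hF.comp measurable_swap
  have hQY : IsProbabilityMeasure (Q.map Y) := Measure.isProbabilityMeasure_map hY.aemeasurable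
  refine ⟨Q.map Y, hQY, (memLp_map_measure_iff aestronglyMeasurable_id hY.aemeasurable).2 hYp, ?_⟩
  calc (Q.map Y).bind (randomMapKernel P F)
      = (P.prod (Q.map Y)).map fun q => F q.2 q.1 := bind_randomMapKernel hF _
    _ = ((P.prod Q).map (Prod.map id Y)).map fun q => F q.2 q.1 := by
        rw [← Measure.map_prod_map _ _ measurable_id hY, Measure.map_id]
    _ = (P.prod Q).map fun q => F (Y q.2) q.1 :=
        Measure.map_map hF' (measurable_id.prodMap hY)
    _ = Q.map fun ω => F (Y fun n => ω (n + 1)) (ω 0) := by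
        rw [← hS.map_eq, Measure.map_map hY' hS.measurable]
        rfl
    _ = Q.map Y := Measure.map_congr hfix.symm

end RandomMap

section Invariant

/-- `κ` shrinks the Lipschitz constants of bounded functions by the factor `ρ`; by Kantorovich
duality, this says that `κ` contracts the `1`-Wasserstein distance by `ρ`. -/
def ContractsLipschitz {X : Type*} [PseudoMetricSpace X] [MeasurableSpace X] (κ : Kernel X X)
    (ρ : ℝ≥0) : Prop :=
  ∀ (f : BoundedContinuousFunction X ℝ) (l : ℝ≥0), LipschitzWith l f →
    LipschitzWith (ρ * l) fun x => ∫ y, f y ∂κ x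

variable {X : Type*} [PseudoMetricSpace X] [MeasurableSpace X] [BorelSpace X]
  {κ : Kernel X X} [IsMarkovKernel κ] {ρ : ℝ≥0}

lemma ContractsLipschitz.exists_integral_eq (hκ : ContractsLipschitz κ ρ)
    (f : BoundedContinuousFunction X ℝ) {l : ℝ≥0} (hf : LipschitzWith l f) (n : ℕ) :
    ∃ g : BoundedContinuousFunction X ℝ, LipschitzWith (ρ ^ n * l) g ∧ (∀ x, ‖g x‖ ≤ ‖f‖) ∧
      ∀ μ : Measure X, IsFiniteMeasure μ → κ.Invariant μ → ∫ x, g x ∂μ = ∫ x, f x ∂μ := by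
  induction n with
  | zero => exact ⟨f, by simpa using hf, f.norm_coe_le_norm, fun μ _ _ => rfl⟩
  | succ n ih =>
    obtain ⟨g, hgl, hgb, hg⟩ := ih
    have hl := hκ g _ hgl
    have hb (x : X) : ‖∫ y, g y ∂κ x‖ ≤ ‖f‖ := by
      simpa using norm_integral_le_of_norm_le_const (μ := κ x) (.of_forall hgb)
    refine ⟨.ofNormedAddCommGroup _ hl.continuous ‖f‖ hb, ?_, hb, fun μ _ hμ => ?_⟩
    · rwa [pow_succ', mul_assoc]
    · have hcomp : (κ ∘ₖ Kernel.const Unit μ) () = μ := by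
        rw [Kernel.comp_const, Kernel.const_apply, hμ.def]
      have hgμ := Kernel.integral_comp (hcomp.symm ▸ g.integrable μ)
      rw [hcomp, Kernel.const_apply] at hgμ
      exact hgμ.symm.trans (hg μ ‹_› hμ)

lemma measure_eq_of_forall_lipschitz_integral_eq {μ ν : Measure X} [IsProbabilityMeasure μ]
    [IsProbabilityMeasure ν]
    (h : ∀ (f : BoundedContinuousFunction X ℝ) (l : ℝ≥0), LipschitzWith l f →
      ∫ x, f x ∂μ = ∫ x, f x ∂ν) : μ = ν := by
  let μ' : ProbabilityMeasure X := ⟨μ, ‹_›⟩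
  let ν' : ProbabilityMeasure X := ⟨ν, ‹_›⟩
  have hlim : Tendsto (fun _ : ℕ => μ') atTop (𝓝 ν') := by
    refine tendsto_iff_forall_lipschitz_integral_tendsto.2 fun f hfb ⟨l, hl⟩ => ?_
    obtain ⟨C, hC⟩ := hfb
    have hμν : ∫ x, f x ∂μ = ∫ x, f x ∂ν := h ⟨⟨f, hl.continuous⟩, C, hC⟩ l hl
    exact hμν ▸ tendsto_const_nhds
  exact congrArg Subtype.val (tendsto_nhds_unique (a := μ') (b := ν') tendsto_const_nhds hlim)

theorem ContractsLipschitz.invariant_unique (hκ : ContractsLipschitz κ ρ) (hρ : ρ < 1)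
    {μ ν : Measure X} [IsProbabilityMeasure μ] [IsProbabilityMeasure ν] (hμ : κ.Invariant μ)
    (hν : κ.Invariant ν) : μ = ν := by
  refine measure_eq_of_forall_lipschitz_integral_eq fun f l hf => ?_
  choose g hgl hgb hg using hκ.exists_integral_eq f hf
  obtain ⟨x₀⟩ := μ.nonempty_of_neZero
  have hg₀ (x : X) : Tendsto (fun n => g n x - g n x₀) atTop (𝓝 0) := by
    refine squeeze_zero_norm (fun n => (hgl n).dist_le_mul x x₀) ?_
    have hpow := tendsto_pow_atTop_nhds_zero_of_lt_one ρ.coe_nonneg (NNReal.coe_lt_one.2 hρ)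
    simpa using (hpow.mul_const (l : ℝ)).mul_const (dist x x₀)
  -- `g n` flattens out, so `∫ f` is the limit of the constants `g n x₀` for both measures.
  have hlim (π : Measure X) [IsProbabilityMeasure π] (hπ : κ.Invariant π) :
      Tendsto (fun n => ∫ x, f x ∂π - g n x₀) atTop (𝓝 0) := by
    have hint (n : ℕ) : ∫ x, (g n x - g n x₀) ∂π = ∫ x, f x ∂π - g n x₀ := by
      rw [integral_sub ((g n).integrable π) (integrable_const _), hg n π inferInstance hπ]
      simp
    have hdct := tendsto_integral_of_dominated_convergence (μ := π)
      (F := fun n x => g n x - g n x₀) (fun _ => ‖f‖ + ‖f‖)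
      (fun n => ((g n).continuous.sub continuous_const).aestronglyMeasurable)
      (integrable_const _)
      (fun n => .of_forall fun x => (norm_sub_le _ _).trans (add_le_add (hgb n x) (hgb n x₀)))
      (.of_forall hg₀)
    simpa only [hint, integral_zero] using hdct
  have hsub := (hlim μ hμ).sub (hlim ν hν)
  simp only [sub_sub_sub_cancel_right, sub_zero] at hsub
  exact sub_eq_zero.1 (tendsto_nhds_unique tendsto_const_nhds hsub)

theorem lintegral_le_of_invariant_of_drift {X : Type*} [MeasurableSpace X] {κ : Kernel X X}
    {μ : Measure X} [IsProbabilityMeasure μ] (hμ : κ.Invariant μ) {V : X → ℝ≥0∞}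
    (hV : Measurable V) (hfin : ∫⁻ x, V x ∂μ ≠ ∞) {a c : ℝ≥0∞} (ha : a < 1)
    (hdrift : ∀ x, ∫⁻ y, V y ∂κ x ≤ a * V x + c) : ∫⁻ x, V x ∂μ ≤ c / (1 - a) := by
  have hle : ∫⁻ x, V x ∂μ ≤ a * ∫⁻ x, V x ∂μ + c :=
    calc ∫⁻ x, V x ∂μ = ∫⁻ x, ∫⁻ y, V y ∂κ x ∂μ := by
          conv_lhs => rw [← hμ.def]
          exact Measure.lintegral_bind κ.aemeasurable hV.aemeasurable
      _ ≤ ∫⁻ x, (a * V x + c) ∂μ := lintegral_mono hdrift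
      _ = a * ∫⁻ x, V x ∂μ + c := by
          rw [lintegral_add_right _ measurable_const, lintegral_const_mul _ hV, lintegral_const,
            measure_univ, mul_one]
  rw [ENNReal.le_div_iff_mul_le (.inl (tsub_pos_of_lt ha).ne') (.inl (by finiteness)), mul_comm,
    ENNReal.sub_mul fun _ _ => hfin, one_mul]
  exact tsub_le_iff_left.2 hle

theorem ContractsInLp.contractsLipschitz {Ω E : Type*} [MeasurableSpace Ω] [NormedAddCommGroup E]
    [MeasurableSpace E] [BorelSpace E] [SecondCountableTopology E] {P : Measure Ω}
    [IsProbabilityMeasure P] {F : E → Ω → E} {p : ℝ≥0∞} {ρ : ℝ≥0} (h : ContractsInLp P F p ρ)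
    (hF : Measurable (Function.uncurry F)) (hp : 1 ≤ p) :
    ContractsLipschitz (randomMapKernel P F) ρ := by
  intro f l hf x y
  have hFm (x : E) : Measurable (F x) := hF.of_uncurry_left
  have hint (x : E) : Integrable (fun r => f (F x r)) P :=
    (f.integrable (P.map (F x))).comp_measurable (hFm x)
  have heq (x : E) : ∫ y, f y ∂randomMapKernel P F x = ∫ r, f (F x r) ∂P := by
    rw [randomMapKernel_apply hF]
    exact integral_map (hFm x).aemeasurable f.continuous.aestronglyMeasurable
  calc edist (∫ z, f z ∂randomMapKernel P F x) (∫ z, f z ∂randomMapKernel P F y)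
      = ‖∫ r, (f (F x r) - f (F y r)) ∂P‖ₑ := by
        rw [heq, heq, edist_eq_enorm_sub, integral_sub (hint x) (hint y)]
    _ ≤ ∫⁻ r, ‖f (F x r) - f (F y r)‖ₑ ∂P := enorm_integral_le_lintegral_enorm _
    _ ≤ ∫⁻ r, l * ‖F x r - F y r‖ₑ ∂P := lintegral_mono fun r => by
        simpa only [edist_eq_enorm_sub] using hf (F x r) (F y r)
    _ = l * eLpNorm (fun r => F x r - F y r) 1 P := by
        rw [lintegral_const_mul' _ _ ENNReal.coe_ne_top, eLpNorm_one_eq_lintegral_enorm]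
    _ ≤ l * (ρ * ‖x - y‖ₑ) := by
        gcongr
        exact (eLpNorm_le_eLpNorm_of_exponent_le hp
          ((hFm x).sub (hFm y)).aestronglyMeasurable).trans (h x y)
    _ = (ρ * l : ℝ≥0) * edist x y := by
        rw [edist_eq_enorm_sub, ENNReal.coe_mul, ← mul_assoc, mul_comm (l : ℝ≥0∞)]

end Invariant

section SecondMoment

variable {ι E : Type*} [Fintype ι] [NormedAddCommGroup E] [InnerProductSpace ℝ E]

lemma norm_add_sum_smul_sq (A : E) (D : ι → E) (c : ι → ℝ) :
    ‖A + ∑ i, c i • D i‖ ^ 2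
      = ‖A‖ ^ 2 + 2 * ∑ i, c i * ⟪A, D i⟫ + ∑ i, ∑ j, c i * c j * ⟪D i, D j⟫ := by
  rw [norm_add_sq_real, ← real_inner_self_eq_norm_sq (∑ i, c i • D i)]
  simp only [inner_sum, sum_inner, real_inner_smul_left, real_inner_smul_right]
  rw [Finset.sum_comm]
  simp only [mul_left_comm, mul_assoc]

variable {Ω : Type*} [MeasurableSpace Ω] {Q : Measure Ω} {X : ι → Ω → ℝ}

lemma integrable_norm_add_sum_smul_sq [IsFiniteMeasure Q] (hX : ∀ i, MemLp (X i) 2 Q) (A : E)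
    (D : ι → E) : Integrable (fun ω => ‖A + ∑ i, X i ω • D i‖ ^ 2) Q :=
  ((memLp_const A).add (memLp_finsetSum _ fun i _ =>
    (ContinuousLinearMap.toSpanSingleton ℝ (D i)).comp_memLp' (hX i))).integrable_norm_pow
    two_ne_zero

lemma integral_norm_add_sum_smul_sq [IsProbabilityMeasure Q] (hX : ∀ i, MemLp (X i) 2 Q)
    (hcov : Pairwise fun i j => cov[X i, X j; Q] = 0) (A : E) (D : ι → E) :
    ∫ ω, ‖A + ∑ i, X i ω • D i‖ ^ 2 ∂Q
      = ‖A + ∑ i, Q[X i] • D i‖ ^ 2 + ∑ i, Var[X i; Q] * ‖D i‖ ^ 2 := by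
  set B : E := A + ∑ i, Q[X i] • D i
  have hcenter (ω : Ω) : A + ∑ i, X i ω • D i = B + ∑ i, (X i ω - Q[X i]) • D i := by
    simp only [B, sub_smul, Finset.sum_sub_distrib]
    abel
  have hZ (i : ι) : MemLp (fun ω => X i ω - Q[X i]) 2 Q := (hX i).sub (memLp_const _)
  have hZ₁ (i : ι) : Integrable (fun ω => X i ω - Q[X i]) Q := (hZ i).integrable one_le_two
  have hZ₂ (i j : ι) : Integrable (fun ω => (X i ω - Q[X i]) * (X j ω - Q[X j])) Q :=
    (hZ i).integrable_mul (hZ j)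
  have hmean (i : ι) : ∫ ω, (X i ω - Q[X i]) ∂Q = 0 := by
    rw [integral_sub ((hX i).integrable one_le_two) (integrable_const _)]
    simp
  have hlin : Integrable (fun ω => 2 * ∑ i, (X i ω - Q[X i]) * ⟪B, D i⟫) Q :=
    (integrable_finsetSum _ fun i _ => (hZ₁ i).mul_const _).const_mul 2
  have hquad : Integrable
      (fun ω => ∑ i, ∑ j, (X i ω - Q[X i]) * (X j ω - Q[X j]) * ⟪D i, D j⟫) Q :=
    integrable_finsetSum _ fun i _ => integrable_finsetSum _ fun j _ => (hZ₂ i j).mul_const _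
  simp only [hcenter, norm_add_sum_smul_sq]
  rw [integral_add (by exact (integrable_const _).add hlin) hquad,
    integral_add (integrable_const _) hlin,
    integral_const_mul, integral_finsetSum _ fun i _ => (hZ₁ i).mul_const _,
    integral_finsetSum _ fun i _ => integrable_finsetSum _ fun j _ => (hZ₂ i j).mul_const _]
  simp only [integral_mul_const, hmean, zero_mul, Finset.sum_const_zero, mul_zero, add_zero,
    integral_const, probReal_univ, one_smul]
  congr 1
  refine Finset.sum_congr rfl fun i _ => ?_
  rw [integral_finsetSum _ fun j _ => (hZ₂ i j).mul_const _, Finset.sum_eq_single i]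
  · rw [integral_mul_const, real_inner_self_eq_norm_sq, ← covariance_self (hX i).1.aemeasurable,
      covariance]
  · intro j _ hji
    rw [integral_mul_const, ← covariance, hcov hji.symm, zero_mul]
  · exact fun hi => absurd (Finset.mem_univ i) hi

lemma lintegral_pi_enorm_add_sum_smul_sq {ν : ι → Measure ℝ} [∀ i, IsProbabilityMeasure (ν i)]
    (hν : ∀ i, MemLp id 2 (ν i)) (A : E) (D : ι → E) :
    ∫⁻ x, ‖A + ∑ i, x i • D i‖ₑ ^ 2 ∂Measure.pi ν
      = ENNReal.ofReal (‖A + ∑ i, (∫ t, t ∂ν i) • D i‖ ^ 2 + ∑ i, Var[id; ν i] * ‖D i‖ ^ 2) := by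
  have heval (i : ι) := measurePreserving_eval ν i
  have hX (i : ι) : MemLp (fun x : ι → ℝ => x i) 2 (Measure.pi ν) :=
    (hν i).comp_measurePreserving (heval i)
  have hindep : iIndepFun (fun i (x : ι → ℝ) => x i) (Measure.pi ν) :=
    iIndepFun_pi (X := fun _ => id) fun _ => aemeasurable_id
  have hcov : Pairwise fun i j => cov[fun x : ι → ℝ => x i, fun x => x j; Measure.pi ν] = 0 :=
    fun i j hij => (hindep.indepFun hij).covariance_eq_zero (hX i) (hX j)
  have hval := integral_norm_add_sum_smul_sq hX hcov A D
  have hmean (i : ι) : ∫ x, x i ∂Measure.pi ν = ∫ t, t ∂ν i :=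
    integral_comp_eval (X := fun _ => ℝ) (μ := ν) (i := i) (f := fun t : ℝ => t)
      aestronglyMeasurable_id
  have hvar (i : ι) : Var[fun x : ι → ℝ => x i; Measure.pi ν] = Var[id; ν i] := by
    rw [← (heval i).map_eq, variance_map aemeasurable_id (heval i).aemeasurable]
    rfl
  simp only [hmean, hvar] at hval
  rw [← hval, ofReal_integral_eq_lintegral_ofReal
    (integrable_norm_add_sum_smul_sq hX A D) (.of_forall fun _ => sq_nonneg _)]
  simp only [ENNReal.ofReal_pow (norm_nonneg _), ofReal_norm]

lemma lintegral_stdGaussian_enorm_add_smul_sq (d : ℕ) (w : Euc d) (σ : ℝ) :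
    ∫⁻ z, ‖w + σ • z‖ₑ ^ 2 ∂_root_.stdGaussian d = ENNReal.ofReal (‖w‖ ^ 2 + σ ^ 2 * d) := by
  have hsum (x : Fin d → ℝ) : w + σ • (EuclideanSpace.equiv (Fin d) ℝ).symm x
      = w + ∑ i, x i • EuclideanSpace.single i σ := by
    ext j
    simp [Pi.single_apply, mul_comm σ]
  rw [_root_.stdGaussian, lintegral_map (by fun_prop)
    (EuclideanSpace.equiv (Fin d) ℝ).symm.continuous.measurable]
  simp only [hsum]
  rw [lintegral_pi_enorm_add_sum_smul_sq fun _ => memLp_id_gaussianReal 2]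
  simp only [integral_id_gaussianReal, variance_id_gaussianReal]
  simp [mul_comm]

section Bernoulli

variable {p : ℝ≥0∞}

lemma isProbabilityMeasure_bern (hp : p ≤ 1) : IsProbabilityMeasure (bern p) := by
  constructor
  simp [bern, hp]

lemma integrable_bern (hp : p ≠ ∞) (f : ℝ → ℝ) : Integrable f (bern p) :=
  ((integrable_dirac (by simp)).smul_measure hp).add_measure
    ((integrable_dirac (by simp)).smul_measure (by simp))

lemma integral_bern (hp : p ≤ 1) (f : ℝ → ℝ) :
    ∫ x, f x ∂bern p = p.toReal * f 1 + (1 - p.toReal) * f 0 := by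
  have hp' : p ≠ ∞ := ne_top_of_le_ne_top ENNReal.one_ne_top hp
  rw [bern, integral_add_measure ((integrable_dirac (by simp)).smul_measure hp')
      ((integrable_dirac (by simp)).smul_measure (by simp)), integral_smul_measure,
    integral_smul_measure, integral_dirac, integral_dirac,
    ENNReal.toReal_sub_of_le hp ENNReal.one_ne_top]
  simp

lemma memLp_id_bern (hp : p ≠ ∞) : MemLp id 2 (bern p) :=
  (memLp_two_iff_integrable_sq aestronglyMeasurable_id).2 (integrable_bern hp _)

lemma variance_id_bern_le (hp : p ≤ 1) : Var[id; bern p] ≤ p.toReal := by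
  have := isProbabilityMeasure_bern hp
  refine (variance_le_expectation_sq aestronglyMeasurable_id).trans_eq ?_
  simp [integral_bern hp]

end Bernoulli

lemma inv_natCast_le_one (n : ℕ) [NeZero n] : (n : ℝ≥0∞)⁻¹ ≤ 1 :=
  ENNReal.inv_le_one.2 (by exact_mod_cast NeZero.one_le)

instance isProbabilityMeasure_bern_inv_natCast (n : ℕ) [NeZero n] :
    IsProbabilityMeasure (bern (n : ℝ≥0∞)⁻¹) :=
  isProbabilityMeasure_bern (inv_natCast_le_one n)

-- The barycentre of the `A + D i` is the mean, and each variance is at most `1 / K`.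
lemma lintegral_bern_enorm_add_sum_smul_sq_le {K : ℕ} [NeZero K] (A : E) (D : Fin K → E) :
    ∫⁻ h, ‖A + ∑ i, h i • D i‖ₑ ^ 2 ∂Measure.pi (fun _ => bern (K : ℝ≥0∞)⁻¹)
      ≤ ENNReal.ofReal ((K : ℝ)⁻¹ * ∑ i, (‖A + D i‖ ^ 2 + ‖D i‖ ^ 2)) := by
  have hp := inv_natCast_le_one K
  have hK : (0 : ℝ) < K := by exact_mod_cast NeZero.pos K
  have hp' : (K : ℝ≥0∞)⁻¹ ≠ ∞ := ne_top_of_le_ne_top ENNReal.one_ne_top hp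
  rw [lintegral_pi_enorm_add_sum_smul_sq fun _ => memLp_id_bern hp']
  refine ENNReal.ofReal_le_ofReal ?_
  rw [Finset.sum_add_distrib, mul_add]
  refine add_le_add ?_ ?_
  · have hbary : A + ∑ i, (∫ t, t ∂bern (K : ℝ≥0∞)⁻¹) • D i = (K : ℝ)⁻¹ • ∑ i, (A + D i) := by
      rw [integral_bern hp (fun t => t), Finset.sum_add_distrib, smul_add, Finset.smul_sum]
      simp [← Nat.cast_smul_eq_nsmul ℝ, smul_smul, hK.ne', Finset.smul_sum]
    calc ‖A + ∑ i, (∫ t, t ∂bern (K : ℝ≥0∞)⁻¹) • D i‖ ^ 2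
        = ((K : ℝ)⁻¹ * ‖∑ i, (A + D i)‖) ^ 2 := by
          rw [hbary, norm_smul, Real.norm_of_nonneg (by positivity)]
      _ ≤ ((K : ℝ)⁻¹ * ∑ i, ‖A + D i‖) ^ 2 := by gcongr; exact norm_sum_le _ _
      _ ≤ (K : ℝ)⁻¹ ^ 2 * (K * ∑ i, ‖A + D i‖ ^ 2) := by
          rw [mul_pow]
          gcongr
          simpa using sq_sum_le_card_mul_sum_sq (s := Finset.univ) (f := fun i => ‖A + D i‖)
      _ = (K : ℝ)⁻¹ * ∑ i, ‖A + D i‖ ^ 2 := by field_simp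
  · rw [Finset.mul_sum]
    gcongr with i
    simpa using variance_id_bern_le hp

end SecondMoment

section GradientField

variable {E : Type*} [NormedAddCommGroup E] [InnerProductSpace ℝ E] {f : E → ℝ} {G : E → E}
  {m L : ℝ}

lemma mul_norm_sub_sq_le_inner_of_quadratic_lower_bound
    (h : ∀ x y, m / 2 * ‖x - y‖ ^ 2 ≤ f y - f x - ⟪G x, y - x⟫) (x y : E) :
    m * ‖x - y‖ ^ 2 ≤ ⟪G x - G y, x - y⟫ := by
  have hxy := h x y
  have hyx := h y x
  rw [← neg_sub x y, inner_neg_right] at hxy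
  rw [norm_sub_rev] at hyx
  rw [inner_sub_left]
  linarith

lemma norm_sub_sq_le_bregman (hL : 0 < L) (hlo : ∀ x y, 0 ≤ f y - f x - ⟪G x, y - x⟫)
    (hup : ∀ x y, f y - f x - ⟪G x, y - x⟫ ≤ L / 2 * ‖x - y‖ ^ 2) (x y : E) :
    ‖G y - G x‖ ^ 2 ≤ 2 * L * (f y - f x - ⟪G x, y - x⟫) := by
  -- Compare `f` with its linearisation at `x` at the point one gradient step away from `y`.
  set D := G y - G x
  have hlo' := hlo x (y - L⁻¹ • D)
  have hup' := hup y (y - L⁻¹ • D)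
  rw [sub_sub_cancel, sub_sub_cancel_left, inner_neg_right, inner_smul_right, norm_smul, mul_pow,
    Real.norm_eq_abs, sq_abs] at hup'
  rw [sub_right_comm y, inner_sub_right, inner_smul_right] at hlo'
  have hD : ‖D‖ ^ 2 = ⟪G y, D⟫ - ⟪G x, D⟫ := by
    rw [← inner_sub_left, real_inner_self_eq_norm_sq]
  have hbregman : L⁻¹ * ‖D‖ ^ 2 / 2 ≤ f y - f x - ⟪G x, y - x⟫ := by
    have : L / 2 * (L⁻¹ ^ 2 * ‖D‖ ^ 2) = L⁻¹ * ‖D‖ ^ 2 / 2 := by field_simp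
    linear_combination hlo' + hup' + this + L⁻¹ * hD
  calc ‖D‖ ^ 2 = 2 * L * (L⁻¹ * ‖D‖ ^ 2 / 2) := by field_simp
    _ ≤ _ := by gcongr

lemma norm_sub_sq_le_mul_inner (hL : 0 < L) (hlo : ∀ x y, 0 ≤ f y - f x - ⟪G x, y - x⟫)
    (hup : ∀ x y, f y - f x - ⟪G x, y - x⟫ ≤ L / 2 * ‖x - y‖ ^ 2) (x y : E) :
    ‖G x - G y‖ ^ 2 ≤ L * ⟪G x - G y, x - y⟫ := by
  have hxy := norm_sub_sq_le_bregman hL hlo hup x y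
  have hyx := norm_sub_sq_le_bregman hL hlo hup y x
  rw [norm_sub_rev, ← neg_sub x y, inner_neg_right] at hxy
  rw [inner_sub_left]
  linarith

lemma norm_sub_le_mul_of_quadratic_bounds (hL : 0 < L)
    (hlo : ∀ x y, 0 ≤ f y - f x - ⟪G x, y - x⟫)
    (hup : ∀ x y, f y - f x - ⟪G x, y - x⟫ ≤ L / 2 * ‖x - y‖ ^ 2) (x y : E) :
    ‖G x - G y‖ ≤ L * ‖x - y‖ := by
  have hle : ‖G x - G y‖ * ‖G x - G y‖ ≤ L * ‖x - y‖ * ‖G x - G y‖ :=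
    calc ‖G x - G y‖ * ‖G x - G y‖ = ‖G x - G y‖ ^ 2 := (sq _).symm
      _ ≤ L * ⟪G x - G y, x - y⟫ := norm_sub_sq_le_mul_inner hL hlo hup x y
      _ ≤ L * (‖G x - G y‖ * ‖x - y‖) := by gcongr; exact real_inner_le_norm _ _
      _ = L * ‖x - y‖ * ‖G x - G y‖ := by ring
  rcases (norm_nonneg (G x - G y)).eq_or_lt with h0 | hpos
  · rw [← h0]; positivity
  · exact le_of_mul_le_mul_right hle hpos

end GradientField

section Midpoint

variable {E : Type*} [NormedAddCommGroup E] [InnerProductSpace ℝ E] {m L η s : ℝ} {u v w : E}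

lemma norm_midpoint_increment_le (hL : 0 ≤ L) (hηL : η * L ≤ 1) (hs : 0 ≤ s) (hsη : s ≤ η)
    (hv : ‖v‖ ≤ L * ‖u‖) (hw : ‖w‖ ≤ L * ‖u - s • v‖) : ‖w‖ ≤ 2 * L * ‖u‖ := by
  have hsv : ‖s • v‖ ≤ ‖u‖ :=
    calc ‖s • v‖ = s * ‖v‖ := by rw [norm_smul, Real.norm_of_nonneg hs]
      _ ≤ η * (L * ‖u‖) := by gcongr; exact hs.trans hsη
      _ = η * L * ‖u‖ := by ring
      _ ≤ ‖u‖ := mul_le_of_le_one_left (norm_nonneg u) hηL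
  calc ‖w‖ ≤ L * ‖u - s • v‖ := hw
    _ ≤ L * (‖u‖ + ‖s • v‖) := by gcongr; exact norm_sub_le _ _
    _ ≤ 2 * L * ‖u‖ := by linarith [mul_le_mul_of_nonneg_left hsv hL]

lemma inner_midpoint_increment_ge (hm : 0 ≤ m) (hmL : m ≤ L) (hηL : η * L ≤ 1) (hs : 0 ≤ s)
    (hsη : s ≤ η) (hv : ‖v‖ ≤ L * ‖u‖) (hw : ‖w‖ ≤ L * ‖u - s • v‖)
    (hmono : m * ‖u - s • v‖ ^ 2 ≤ ⟪w, u - s • v⟫) :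
    (m - 4 * L ^ 2 * η) * ‖u‖ ^ 2 ≤ ⟪w, u⟫ := by
  have hL : 0 ≤ L := hm.trans hmL
  have hη : 0 ≤ η := hs.trans hsη
  have hvu : s * ⟪u, v⟫ ≤ η * L * ‖u‖ ^ 2 :=
    calc s * ⟪u, v⟫ ≤ s * (‖u‖ * ‖v‖) := by gcongr; exact real_inner_le_norm u v
      _ ≤ η * (‖u‖ * (L * ‖u‖)) := by gcongr
      _ = η * L * ‖u‖ ^ 2 := by ring
  have hvw : -(2 * L ^ 2 * η * ‖u‖ ^ 2) ≤ s * ⟪w, v⟫ := by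
    have hw' := norm_midpoint_increment_le hL hηL hs hsη hv hw
    have : s * (‖w‖ * ‖v‖) ≤ 2 * L ^ 2 * η * ‖u‖ ^ 2 :=
      calc s * (‖w‖ * ‖v‖) ≤ η * ((2 * L * ‖u‖) * (L * ‖u‖)) := by gcongr
        _ = 2 * L ^ 2 * η * ‖u‖ ^ 2 := by ring
    linarith [mul_le_mul_of_nonneg_left (neg_le_of_abs_le (abs_real_inner_le_norm w v)) hs]
  have hnorm : (1 - 2 * (η * L)) * ‖u‖ ^ 2 ≤ ‖u - s • v‖ ^ 2 := by
    rw [norm_sub_sq_real, inner_smul_right]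
    linarith [sq_nonneg ‖s • v‖]
  have hmη : m * (2 * (η * L) * ‖u‖ ^ 2) ≤ L * (2 * (η * L) * ‖u‖ ^ 2) := by gcongr
  calc (m - 4 * L ^ 2 * η) * ‖u‖ ^ 2
      ≤ m * ((1 - 2 * (η * L)) * ‖u‖ ^ 2) - 2 * L ^ 2 * η * ‖u‖ ^ 2 := by linarith
    _ ≤ m * ‖u - s • v‖ ^ 2 + s * ⟪w, v⟫ := by linarith [mul_le_mul_of_nonneg_left hnorm hm]
    _ ≤ ⟪w, u - s • v⟫ + s * ⟪w, v⟫ := by gcongr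
    _ = ⟪w, u⟫ := by rw [inner_sub_right, inner_smul_right]; ring

lemma norm_sub_smul_midpoint_increment_sq_le (hm : 0 ≤ m) (hmL : m ≤ L) (hηL : η * L ≤ 1)
    (hs : 0 ≤ s) (hsη : s ≤ η) (hv : ‖v‖ ≤ L * ‖u‖) (hw : ‖w‖ ≤ L * ‖u - s • v‖)
    (hmono : m * ‖u - s • v‖ ^ 2 ≤ ⟪w, u - s • v⟫) :
    ‖u - η • w‖ ^ 2 ≤ (1 - 2 * m * η + 12 * L ^ 2 * η ^ 2) * ‖u‖ ^ 2 := by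
  have hη : 0 ≤ η := hs.trans hsη
  have hinner := inner_midpoint_increment_ge hm hmL hηL hs hsη hv hw hmono
  have hnorm := norm_midpoint_increment_le (hm.trans hmL) hηL hs hsη hv hw
  calc ‖u - η • w‖ ^ 2 = ‖u‖ ^ 2 - 2 * η * ⟪w, u⟫ + η ^ 2 * ‖w‖ ^ 2 := by
        rw [norm_sub_sq_real, inner_smul_right, norm_smul, mul_pow, Real.norm_eq_abs, sq_abs,
          real_inner_comm]
        ring
    _ ≤ ‖u‖ ^ 2 - 2 * η * ((m - 4 * L ^ 2 * η) * ‖u‖ ^ 2) + η ^ 2 * (2 * L * ‖u‖) ^ 2 := by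
        gcongr
    _ = (1 - 2 * m * η + 12 * L ^ 2 * η ^ 2) * ‖u‖ ^ 2 := by ring

end Midpoint

lemma enorm_add_sq_le_young {E : Type*} [SeminormedAddCommGroup E] {α : ℝ} (hα : 0 < α)
    (a b : E) :
    ‖a + b‖ₑ ^ 2 ≤ ENNReal.ofReal (1 + α) * ‖a‖ₑ ^ 2 + ENNReal.ofReal (1 + α⁻¹) * ‖b‖ₑ ^ 2 := by
  have hsq : ‖a + b‖ ^ 2 ≤ (1 + α) * ‖a‖ ^ 2 + (1 + α⁻¹) * ‖b‖ ^ 2 :=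
    calc ‖a + b‖ ^ 2 ≤ (‖a‖ + ‖b‖) ^ 2 := by gcongr; exact norm_add_le a b
      _ ≤ (1 + α) * ‖a‖ ^ 2 + (1 + α⁻¹) * ‖b‖ ^ 2 := by
        linarith [two_mul_le_add_mul_sq (a := ‖a‖) (b := ‖b‖) hα]
  simp only [← ofReal_norm, ← ENNReal.ofReal_pow (norm_nonneg _)]
  rw [← ENNReal.ofReal_mul (by positivity), ← ENNReal.ofReal_mul (by positivity),
    ← ENNReal.ofReal_add (by positivity) (by positivity)]
  exact ENNReal.ofReal_le_ofReal hsq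

lemma eLpNorm_two_sq_eq_lintegral_enorm_sq {Ω G : Type*} [MeasurableSpace Ω]
    [NormedAddCommGroup G] (P : Measure Ω) (f : Ω → G) :
    eLpNorm f 2 P ^ 2 = ∫⁻ r, ‖f r‖ₑ ^ 2 ∂P := by
  simpa only [NNReal.coe_ofNat, ENNReal.coe_ofNat, ENNReal.rpow_two] using
    eLpNorm_nnreal_pow_eq_lintegral (f := f) (μ := P) (p := 2) two_ne_zero

section PRLMC

namespace StrongAssumption

variable {d : ℕ} {U : Euc d → ℝ} {m L : ℝ}

lemma inner_gradient_sub_ge (hU : StrongAssumption U m L) (x y : Euc d) :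
    m * ‖x - y‖ ^ 2 ≤ ⟪gradient U x - gradient U y, x - y⟫ :=
  mul_norm_sub_sq_le_inner_of_quadratic_lower_bound (fun x y => (hU.2.2.2.1 x y).1) x y

lemma norm_gradient_sub_le (hU : StrongAssumption U m L) (x y : Euc d) :
    ‖gradient U x - gradient U y‖ ≤ L * ‖x - y‖ := by
  obtain ⟨-, hm, hmL, hquad, -⟩ := hU
  refine norm_sub_le_mul_of_quadratic_bounds (hm.trans_le hmL) (fun x y => ?_)
    (fun x y => (hquad x y).2) x y
  exact (by positivity : 0 ≤ m / 2 * ‖x - y‖ ^ 2).trans (hquad x y).1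

lemma norm_gradient_le (hU : StrongAssumption U m L) (x : Euc d) : ‖gradient U x‖ ≤ L * ‖x‖ := by
  simpa [hU.2.2.2.2] using hU.norm_gradient_sub_le x 0

lemma continuous_gradient (hU : StrongAssumption U m L) : Continuous (gradient U) :=
  (LipschitzWith.of_dist_le' (K := L) fun x y => by
    simpa only [dist_eq_norm] using hU.norm_gradient_sub_le x y).continuous

end StrongAssumption

/-- One PRLMC step as a random map: the position `x` and the noise vector
`r = (Bernoulli variables, midpoint Gaussians, driving Gaussian)` give the next position. -/
def prlmcMap {d : ℕ} (U : Euc d → ℝ) (η : ℝ) (K : ℕ) (x : Euc d)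
    (r : (Fin K → ℝ) × (Fin K → Euc d) × Euc d) : Euc d :=
  prlmcStep U η K x r.1 r.2.1 r.2.2

instance isProbabilityMeasure_stdGaussian (d : ℕ) : IsProbabilityMeasure (_root_.stdGaussian d) :=
  Measure.isProbabilityMeasure_map
    (EuclideanSpace.equiv (Fin d) ℝ).symm.continuous.aemeasurable

instance isProbabilityMeasure_prlmcNoise (d K : ℕ) [NeZero K] :
    IsProbabilityMeasure (prlmcNoise d K) := by
  unfold prlmcNoise
  infer_instance

lemma lintegral_prod_stdGaussian_enorm_add_smul_sq {Ω : Type*} [MeasurableSpace Ω]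
    (P : Measure Ω) [IsProbabilityMeasure P] {d : ℕ} {f : Ω → Euc d} (hf : Measurable f)
    (σ : ℝ) :
    ∫⁻ q, ‖f q.1 + σ • q.2‖ₑ ^ 2 ∂P.prod (_root_.stdGaussian d)
      = ∫⁻ ω, ‖f ω‖ₑ ^ 2 ∂P + ENNReal.ofReal (σ ^ 2 * d) := by
  rw [lintegral_prod _ (by fun_prop)]
  simp only [lintegral_stdGaussian_enorm_add_smul_sq]
  simp_rw [ENNReal.ofReal_add (sq_nonneg _) (by positivity : (0 : ℝ) ≤ σ ^ 2 * d),
    ENNReal.ofReal_pow (norm_nonneg _), ofReal_norm]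
  rw [lintegral_add_right _ measurable_const, lintegral_const, measure_univ, mul_one]

section Step

variable {d K : ℕ} {U : Euc d → ℝ} {m L η : ℝ}

lemma measurable_prlmcMap (hU : StrongAssumption U m L) (η : ℝ) (K : ℕ) :
    Measurable (Function.uncurry (prlmcMap U η K)) := by
  have hgrad := hU.continuous_gradient
  unfold prlmcMap prlmcStep prlmcMid Function.uncurry
  fun_prop

lemma measurable_prlmcStep (hU : StrongAssumption U m L) (η : ℝ) (K : ℕ) (x z : Euc d) :
    Measurable fun q : (Fin K → ℝ) × (Fin K → Euc d) => prlmcStep U η K x q.1 q.2 z := by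
  have hgrad := hU.continuous_gradient
  unfold prlmcStep prlmcMid
  fun_prop

lemma prlmcKernel_eq_randomMapKernel [NeZero K] (hU : StrongAssumption U m L) (η : ℝ) :
    prlmcKernel U η K = randomMapKernel (prlmcNoise d K) (prlmcMap U η K) :=
  funext fun x => (randomMapKernel_apply (measurable_prlmcMap hU η K) x).symm

lemma prlmcMap_eq_add (x : Euc d) (r : (Fin K → ℝ) × (Fin K → Euc d) × Euc d) :
    prlmcMap U η K x r = prlmcStep U η K x r.1 r.2.1 0 + √(2 * η) • r.2.2 := by
  simp [prlmcMap, prlmcStep]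

lemma midpoint_time_le (hη : 0 ≤ η) (i : Fin K) : (i : ℝ) * η / K ≤ η * (1 - 1 / K) := by
  have hK : (0 : ℝ) < K := by exact_mod_cast i.pos
  have hi : (i : ℝ) + 1 ≤ K := by exact_mod_cast i.2
  calc (i : ℝ) * η / K ≤ (K - 1) * η / K := by gcongr; linarith
    _ = η * (1 - 1 / K) := by field_simp

lemma prlmcMid_sub_prlmcMid (x y : Euc d) (g : Fin K → Euc d) (i : Fin K) :
    prlmcMid U η K x g i - prlmcMid U η K y g i
      = (x - y) - ((i : ℝ) * η / K) • (gradient U x - gradient U y) := by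
  simp only [prlmcMid, smul_sub]
  abel

lemma prlmcStep_sub_prlmcStep (x y : Euc d) (h : Fin K → ℝ) (g : Fin K → Euc d) (z : Euc d) :
    prlmcStep U η K x h g z - prlmcStep U η K y h g z
      = (x - y - η • (gradient U x - gradient U y))
        + ∑ i, h i • (η • (gradient U x - gradient U y
          - (gradient U (prlmcMid U η K x g i) - gradient U (prlmcMid U η K y g i)))) := by
  simp only [prlmcStep, smul_comm _ η, ← Finset.smul_sum, smul_sub, Finset.sum_sub_distrib]
  abel

-- The first term is the step that uses only the `i`-th midpoint gradient, the second is the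
-- price of randomising over `i`.
lemma norm_prlmc_midpoint_sub_sq_add_le (hU : StrongAssumption U m L) (hη : 0 ≤ η)
    (hηL : η * L ≤ 1) (x y : Euc d) (g : Fin K → Euc d) (i : Fin K) {w e : Euc d}
    (hw : w = gradient U x - gradient U y)
    (he : e = gradient U (prlmcMid U η K x g i) - gradient U (prlmcMid U η K y g i)) :
    ‖(x - y - η • w) + η • (w - e)‖ ^ 2 + ‖η • (w - e)‖ ^ 2
      ≤ (1 - 2 * m * η + 21 * L ^ 2 * η ^ 2) * ‖x - y‖ ^ 2 := by
  have hm : 0 < m := hU.2.1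
  have hmL : m ≤ L := hU.2.2.1
  have hL : 0 < L := hm.trans_le hmL
  set s : ℝ := (i : ℝ) * η / K
  have hs : 0 ≤ s := by positivity
  have hsη : s ≤ η :=
    (midpoint_time_le hη i).trans (mul_le_of_le_one_right hη (by simp))
  have hmid : prlmcMid U η K x g i - prlmcMid U η K y g i = x - y - s • w :=
    hw ▸ prlmcMid_sub_prlmcMid x y g i
  have hwu : ‖w‖ ≤ L * ‖x - y‖ := hw ▸ hU.norm_gradient_sub_le x y
  have hes : ‖e‖ ≤ L * ‖x - y - s • w‖ := by
    rw [← hmid, he]; exact hU.norm_gradient_sub_le _ _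
  have hmono : m * ‖x - y - s • w‖ ^ 2 ≤ ⟪e, x - y - s • w⟫ := by
    rw [← hmid, he]; exact hU.inner_gradient_sub_ge _ _
  have heu : ‖e‖ ≤ 2 * L * ‖x - y‖ := norm_midpoint_increment_le hL.le hηL hs hsη hwu hes
  have hwe : ‖w - e‖ ≤ 3 * L * ‖x - y‖ := by linarith [norm_sub_le w e]
  have hstep := norm_sub_smul_midpoint_increment_sq_le hm.le hmL hηL hs hsη hwu hes hmono
  have hcombine : (x - y - η • w) + η • (w - e) = x - y - η • e := by
    rw [smul_sub]; abel
  calc ‖(x - y - η • w) + η • (w - e)‖ ^ 2 + ‖η • (w - e)‖ ^ 2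
      = ‖x - y - η • e‖ ^ 2 + η ^ 2 * ‖w - e‖ ^ 2 := by
        rw [hcombine, norm_smul, mul_pow, Real.norm_eq_abs, sq_abs]
    _ ≤ (1 - 2 * m * η + 12 * L ^ 2 * η ^ 2) * ‖x - y‖ ^ 2
          + η ^ 2 * (3 * L * ‖x - y‖) ^ 2 := by gcongr
    _ = (1 - 2 * m * η + 21 * L ^ 2 * η ^ 2) * ‖x - y‖ ^ 2 := by ring

lemma lintegral_enorm_prlmcMap_sub_sq_le [NeZero K] (hU : StrongAssumption U m L) (hη : 0 ≤ η)
    (hηL : η * L ≤ 1) (x y : Euc d) :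
    ∫⁻ r, ‖prlmcMap U η K x r - prlmcMap U η K y r‖ₑ ^ 2 ∂prlmcNoise d K
      ≤ ENNReal.ofReal (1 - 2 * m * η + 21 * L ^ 2 * η ^ 2) * ‖x - y‖ₑ ^ 2 := by
  have hmeas := measurable_prlmcMap hU η K
  have hbound (q : (Fin K → Euc d) × Euc d) :
      ∫⁻ h, ‖prlmcMap U η K x (h, q) - prlmcMap U η K y (h, q)‖ₑ ^ 2
          ∂Measure.pi (fun _ => bern (K : ℝ≥0∞)⁻¹)
        ≤ ENNReal.ofReal (1 - 2 * m * η + 21 * L ^ 2 * η ^ 2) * ‖x - y‖ₑ ^ 2 := by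
    simp only [prlmcMap, prlmcStep_sub_prlmcStep]
    refine (lintegral_bern_enorm_add_sum_smul_sq_le _ _).trans ?_
    rw [← ofReal_norm, ← ENNReal.ofReal_pow (norm_nonneg _), ← ENNReal.ofReal_mul' (sq_nonneg _)]
    refine ENNReal.ofReal_le_ofReal ?_
    have hK : (0 : ℝ) < K := by exact_mod_cast NeZero.pos K
    rw [inv_mul_le_iff₀ hK]
    refine (Finset.sum_le_sum fun i _ =>
      norm_prlmc_midpoint_sub_sq_add_le hU hη hηL x y q.1 i rfl rfl).trans_eq ?_
    simp
  rw [prlmcNoise, lintegral_prod_symm _ (by fun_prop)]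
  refine (lintegral_mono hbound).trans_eq ?_
  rw [lintegral_const, measure_univ, mul_one]

lemma lintegral_enorm_prlmcMap_sq [NeZero K] (hU : StrongAssumption U m L) (hη : 0 ≤ η)
    (x : Euc d) :
    ∫⁻ r, ‖prlmcMap U η K x r‖ₑ ^ 2 ∂prlmcNoise d K
      = ∫⁻ r, ‖prlmcStep U η K x r.1 r.2.1 0‖ₑ ^ 2 ∂prlmcNoise d K
        + ENNReal.ofReal (2 * η * d) := by
  set P : Measure ((Fin K → ℝ) × (Fin K → Euc d)) :=
    (Measure.pi fun _ => bern (K : ℝ≥0∞)⁻¹).prod (Measure.pi fun _ => _root_.stdGaussian d)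
  have hassoc : MeasurePreserving MeasurableEquiv.prodAssoc (P.prod (_root_.stdGaussian d))
      (prlmcNoise d K) := measurePreserving_prodAssoc _ _ _
  have hgauss :=
    lintegral_prod_stdGaussian_enorm_add_smul_sq P (measurable_prlmcStep hU η K x 0)
  have hzero := hgauss 0
  simp only [zero_smul, add_zero, ne_eq, OfNat.ofNat_ne_zero, not_false_eq_true, zero_pow, zero_mul,
    ENNReal.ofReal_zero] at hzero
  rw [← hassoc.lintegral_comp_emb MeasurableEquiv.prodAssoc.measurableEmbedding,
    ← hassoc.lintegral_comp_emb MeasurableEquiv.prodAssoc.measurableEmbedding]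
  simp only [prlmcMap_eq_add]
  exact (hgauss √(2 * η)).trans (by rw [Real.sq_sqrt (by positivity), ← hzero]; rfl)

lemma prlmcMid_zero (hU : StrongAssumption U m L) (g : Fin K → Euc d) (i : Fin K) :
    prlmcMid U η K 0 g i = √(2 * i * η / K) • g i := by
  simp [prlmcMid, hU.2.2.2.2]

lemma prlmcStep_zero (hU : StrongAssumption U m L) (h : Fin K → ℝ) (g : Fin K → Euc d) :
    prlmcStep U η K 0 h g 0
      = 0 + ∑ i : Fin K, h i • -(η • gradient U (√(2 * i * η / K) • g i)) := by
  simp [prlmcStep, prlmcMid_zero hU, hU.2.2.2.2, Finset.smul_sum, smul_comm η]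

lemma lintegral_bern_enorm_prlmcStep_zero_sq_le [NeZero K] (hU : StrongAssumption U m L)
    (g : Fin K → Euc d) :
    ∫⁻ h, ‖prlmcStep U η K 0 h g 0‖ₑ ^ 2 ∂Measure.pi (fun _ => bern (K : ℝ≥0∞)⁻¹)
      ≤ ENNReal.ofReal (2 * η ^ 2 * L ^ 2 / K) * ∑ i : Fin K, ‖√(2 * i * η / K) • g i‖ₑ ^ 2 := by
  simp only [prlmcStep_zero hU]
  refine (lintegral_bern_enorm_add_sum_smul_sq_le _ _).trans ?_
  simp only [← ofReal_norm, ← ENNReal.ofReal_pow (norm_nonneg _)]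
  rw [← ENNReal.ofReal_sum_of_nonneg fun _ _ => sq_nonneg _, ← ENNReal.ofReal_mul (by positivity)]
  refine ENNReal.ofReal_le_ofReal ?_
  have hgrad (v : Euc d) : ‖η • gradient U v‖ ^ 2 ≤ η ^ 2 * L ^ 2 * ‖v‖ ^ 2 :=
    calc ‖η • gradient U v‖ ^ 2 = η ^ 2 * ‖gradient U v‖ ^ 2 := by
          rw [norm_smul, mul_pow, Real.norm_eq_abs, sq_abs]
      _ ≤ η ^ 2 * (L * ‖v‖) ^ 2 := by gcongr; exact hU.norm_gradient_le v
      _ = η ^ 2 * L ^ 2 * ‖v‖ ^ 2 := by ring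
  simp only [zero_add, norm_neg, ← two_mul]
  calc (K : ℝ)⁻¹ * ∑ i : Fin K, 2 * ‖η • gradient U (√(2 * i * η / K) • g i)‖ ^ 2
      ≤ (K : ℝ)⁻¹ * ∑ i : Fin K, 2 * (η ^ 2 * L ^ 2 * ‖√(2 * i * η / K) • g i‖ ^ 2) := by
        gcongr; exact hgrad _
    _ = 2 * η ^ 2 * L ^ 2 / K * ∑ i : Fin K, ‖√(2 * i * η / K) • g i‖ ^ 2 := by
        simp only [← Finset.mul_sum]; ring

lemma lintegral_pi_stdGaussian_enorm_midpoint_noise_sq_le (hη : 0 ≤ η) (i : Fin K) :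
    ∫⁻ g, ‖√(2 * i * η / K) • g i‖ₑ ^ 2 ∂Measure.pi (fun _ : Fin K => _root_.stdGaussian d)
      ≤ ENNReal.ofReal (2 * (η * (1 - 1 / K)) * d) := by
  rw [(measurePreserving_eval (fun _ : Fin K => _root_.stdGaussian d) i).lintegral_comp
    (f := fun z => ‖√(2 * i * η / K) • z‖ₑ ^ 2) (by fun_prop)]
  have hgauss := lintegral_stdGaussian_enorm_add_smul_sq d 0 √(2 * i * η / K)
  simp only [zero_add, norm_zero, ne_eq, OfNat.ofNat_ne_zero, not_false_eq_true, zero_pow,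
    Real.sq_sqrt (by positivity : 0 ≤ 2 * (i : ℝ) * η / K)] at hgauss
  rw [hgauss]
  refine ENNReal.ofReal_le_ofReal ?_
  gcongr
  calc 2 * i * η / K = 2 * (i * η / K) := by ring
    _ ≤ 2 * (η * (1 - 1 / K)) := by gcongr; exact midpoint_time_le hη i

lemma lintegral_enorm_prlmcStep_zero_sq_le [NeZero K] (hU : StrongAssumption U m L)
    (hη : 0 ≤ η) :
    ∫⁻ r, ‖prlmcStep U η K 0 r.1 r.2.1 0‖ₑ ^ 2 ∂prlmcNoise d K
      ≤ ENNReal.ofReal (4 * η ^ 3 * L ^ 2 * (1 - 1 / K) * d) := by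
  have hstep : Measurable fun r : (Fin K → ℝ) × (Fin K → Euc d) × Euc d =>
      ‖prlmcStep U η K 0 r.1 r.2.1 0‖ₑ ^ 2 :=
    ((measurable_prlmcStep hU η K 0 0).comp
      (measurable_fst.prodMk measurable_snd.fst)).enorm.pow_const 2
  rw [prlmcNoise, lintegral_prod_symm _ hstep.aemeasurable]
  have hbern (q : (Fin K → Euc d) × Euc d) :=
    lintegral_bern_enorm_prlmcStep_zero_sq_le (η := η) hU q.1
  refine (lintegral_mono hbern).trans ?_
  calc ∫⁻ q : (Fin K → Euc d) × Euc d,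
          ENNReal.ofReal (2 * η ^ 2 * L ^ 2 / K) * ∑ i : Fin K, ‖√(2 * i * η / K) • q.1 i‖ₑ ^ 2
          ∂(Measure.pi fun _ : Fin K => _root_.stdGaussian d).prod (_root_.stdGaussian d)
      = ENNReal.ofReal (2 * η ^ 2 * L ^ 2 / K)
          * ∑ i : Fin K, ∫⁻ g, ‖√(2 * i * η / K) • g i‖ₑ ^ 2
              ∂Measure.pi (fun _ : Fin K => _root_.stdGaussian d) := by
        rw [measurePreserving_fst.lintegral_comp (f := fun g : Fin K → Euc d =>
            ENNReal.ofReal (2 * η ^ 2 * L ^ 2 / K) * ∑ i : Fin K, ‖√(2 * i * η / K) • g i‖ₑ ^ 2)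
            (by fun_prop),
          lintegral_const_mul _ (by fun_prop), lintegral_finsetSum _ fun i _ => by fun_prop]
    _ ≤ ENNReal.ofReal (2 * η ^ 2 * L ^ 2 / K)
          * ∑ _i : Fin K, ENNReal.ofReal (2 * (η * (1 - 1 / K)) * d) := by
        gcongr; exact lintegral_pi_stdGaussian_enorm_midpoint_noise_sq_le hη _
    _ = ENNReal.ofReal (4 * η ^ 3 * L ^ 2 * (1 - 1 / K) * d) := by
        rw [Finset.sum_const, Finset.card_univ, Fintype.card_fin, ← ENNReal.ofReal_nsmul,
          ← ENNReal.ofReal_mul (by positivity), nsmul_eq_mul]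
        have hK : (K : ℝ) ≠ 0 := NeZero.ne _
        congr 1
        field_simp
        ring

lemma lintegral_enorm_prlmcMap_sq_le [NeZero K] (hU : StrongAssumption U m L) (hη : 0 ≤ η)
    (hηL : η * L ≤ 1) {α : ℝ} (hα : 0 < α) (x : Euc d) :
    ∫⁻ r, ‖prlmcMap U η K x r‖ₑ ^ 2 ∂prlmcNoise d K
      ≤ ENNReal.ofReal (1 + α)
          * (ENNReal.ofReal (1 - 2 * m * η + 21 * L ^ 2 * η ^ 2) * ‖x‖ₑ ^ 2)
        + ENNReal.ofReal (1 + α⁻¹) * ENNReal.ofReal (4 * η ^ 3 * L ^ 2 * (1 - 1 / K) * d)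
        + ENNReal.ofReal (2 * η * d) := by
  have hmeas := measurable_prlmcMap hU η K
  have hcouple (r : (Fin K → ℝ) × (Fin K → Euc d) × Euc d) : prlmcStep U η K x r.1 r.2.1 0
      = (prlmcMap U η K x r - prlmcMap U η K 0 r) + prlmcStep U η K 0 r.1 r.2.1 0 := by
    simp only [prlmcMap_eq_add]; abel
  have hcontract := lintegral_enorm_prlmcMap_sub_sq_le (K := K) hU hη hηL x 0
  rw [sub_zero] at hcontract
  rw [lintegral_enorm_prlmcMap_sq hU hη x]
  gcongr
  calc ∫⁻ r, ‖prlmcStep U η K x r.1 r.2.1 0‖ₑ ^ 2 ∂prlmcNoise d K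
      ≤ ∫⁻ r, (ENNReal.ofReal (1 + α) * ‖prlmcMap U η K x r - prlmcMap U η K 0 r‖ₑ ^ 2
          + ENNReal.ofReal (1 + α⁻¹) * ‖prlmcStep U η K 0 r.1 r.2.1 0‖ₑ ^ 2) ∂prlmcNoise d K :=
        lintegral_mono fun r => by rw [hcouple r]; exact enorm_add_sq_le_young hα _ _
    _ = ENNReal.ofReal (1 + α)
            * ∫⁻ r, ‖prlmcMap U η K x r - prlmcMap U η K 0 r‖ₑ ^ 2 ∂prlmcNoise d K
          + ENNReal.ofReal (1 + α⁻¹)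
            * ∫⁻ r, ‖prlmcStep U η K 0 r.1 r.2.1 0‖ₑ ^ 2 ∂prlmcNoise d K := by
        rw [lintegral_add_left (by fun_prop), lintegral_const_mul' _ _ ENNReal.ofReal_ne_top,
          lintegral_const_mul' _ _ ENNReal.ofReal_ne_top]
    _ ≤ _ := by gcongr; exact lintegral_enorm_prlmcStep_zero_sq_le hU hη

lemma prlmcMap_contractsInLp [NeZero K] (hU : StrongAssumption U m L) (hη : 0 ≤ η)
    (hηL : η * L ≤ 1) :
    ContractsInLp (prlmcNoise d K) (prlmcMap U η K) 2
      (NNReal.sqrt (1 - 2 * m * η + 21 * L ^ 2 * η ^ 2).toNNReal) := by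
  intro x y
  refine (ENNReal.pow_le_pow_left_iff two_ne_zero).1 ?_
  rw [eLpNorm_two_sq_eq_lintegral_enorm_sq, mul_pow, ← ENNReal.coe_pow, NNReal.sq_sqrt]
  exact lintegral_enorm_prlmcMap_sub_sq_le hU hη hηL x y

lemma memLp_prlmcMap [NeZero K] (hU : StrongAssumption U m L) (hη : 0 ≤ η) (hηL : η * L ≤ 1)
    (x : Euc d) : MemLp (prlmcMap U η K x) 2 (prlmcNoise d K) := by
  refine ⟨(measurable_prlmcMap hU η K).of_uncurry_left.aestronglyMeasurable, ?_⟩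
  refine (ENNReal.pow_lt_top_iff.1 ?_).resolve_right two_ne_zero
  rw [eLpNorm_two_sq_eq_lintegral_enorm_sq]
  exact (lintegral_enorm_prlmcMap_sq_le hU hη hηL one_pos x).trans_lt (by finiteness)

end Step

/-- Step-size threshold: below it the midpoint error terms of order `η²` and `η³` are absorbed by
the strong convexity gain of order `mη`. -/
def prlmcStepBound (m L : ℝ) : ℝ := min (1 / 4) (min (m / 16) (m / (42 * L ^ 2)))

lemma prlmcStepBound_mem_Ioo {m L : ℝ} (hm : 0 < m) (hL : 0 < L) :
    prlmcStepBound m L ∈ Set.Ioo (0 : ℝ) 1 :=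
  ⟨lt_min (by norm_num) (lt_min (by positivity) (by positivity)),
    (min_le_left _ _).trans_lt (by norm_num)⟩

section SmallStep

variable {d K : ℕ} {U : Euc d → ℝ} {m L η : ℝ}

lemma mul_sq_le_of_le_prlmcStepBound (hL : 0 < L) (hηb : η ≤ prlmcStepBound m L) :
    η * (42 * L ^ 2) ≤ m :=
  (le_div_iff₀ (by positivity)).1 (hηb.trans ((min_le_right _ _).trans (min_le_right _ _)))

lemma contraction_factor_le (hL : 0 < L) (hη : 0 ≤ η) (hηb : η ≤ prlmcStepBound m L) :
    1 - 2 * m * η + 21 * L ^ 2 * η ^ 2 ≤ 1 - 3 / 2 * (m * η) := by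
  have hη42 := mul_sq_le_of_le_prlmcStepBound hL hηb
  linarith [mul_le_mul_of_nonneg_left hη42 hη]

lemma mul_le_one_of_le_prlmcStepBound (hL : 0 < L) (hmL : m ≤ L)
    (hηb : η ≤ prlmcStepBound m L) : η * L ≤ 1 := by
  have hη42 := mul_sq_le_of_le_prlmcStepBound hL hηb
  have : 42 * (η * L) * L ≤ 1 * L := by linarith
  linarith [le_of_mul_le_mul_right this hL]

lemma midpoint_noise_coeff_le (hm : 0 < m) (hη : 0 < η) (hηb : η ≤ prlmcStepBound m L) :
    (1 + (m * η / 2)⁻¹) * (4 * η ^ 3) ≤ η := by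
  have hη4 : η ≤ 1 / 4 := hηb.trans (min_le_left _ _)
  have hη16 : η ≤ m / 16 := hηb.trans ((min_le_right _ _).trans (min_le_left _ _))
  have hsq : 8 * η ^ 2 ≤ 1 := by nlinarith
  calc (1 + (m * η / 2)⁻¹) * (4 * η ^ 3) = η / 2 * (8 * η ^ 2) + η / 2 * (16 * (η / m)) := by
        field_simp
        ring
    _ ≤ η / 2 * 1 + η / 2 * 1 := by
        have : η / m ≤ 1 / 16 := by rw [div_le_iff₀ hm]; linarith
        gcongr
        linarith
    _ = η := by ring

lemma lintegral_enorm_prlmcMap_sq_le_drift [NeZero K] (hU : StrongAssumption U m L) (hη : 0 < η)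
    (hηb : η ≤ prlmcStepBound m L) (x : Euc d) :
    ∫⁻ r, ‖prlmcMap U η K x r‖ₑ ^ 2 ∂prlmcNoise d K
      ≤ ENNReal.ofReal (1 - m * η) * ‖x‖ₑ ^ 2
        + ENNReal.ofReal (η * (d * (2 + L ^ 2 * (1 - 1 / K)))) := by
  have hm : 0 < m := hU.2.1
  have hL : 0 < L := hm.trans_le hU.2.2.1
  have hηL := mul_le_one_of_le_prlmcStepBound hL hU.2.2.1 hηb
  have hK : (0 : ℝ) ≤ 1 - 1 / K := by
    rw [sub_nonneg, div_le_one (by exact_mod_cast NeZero.pos K)]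
    exact_mod_cast NeZero.one_le
  have hfactor : (1 + m * η / 2) * (1 - 2 * m * η + 21 * L ^ 2 * η ^ 2) ≤ 1 - m * η :=
    calc (1 + m * η / 2) * (1 - 2 * m * η + 21 * L ^ 2 * η ^ 2)
        ≤ (1 + m * η / 2) * (1 - 3 / 2 * (m * η)) := by
          gcongr; exact contraction_factor_le hL hη.le hηb
      _ ≤ 1 - m * η := by linarith [sq_nonneg (m * η)]
  have hnoise : (1 + (m * η / 2)⁻¹) * (4 * η ^ 3 * L ^ 2 * (1 - 1 / K) * d) + 2 * η * d
      ≤ η * (d * (2 + L ^ 2 * (1 - 1 / K))) := by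
    have := mul_le_mul_of_nonneg_right (midpoint_noise_coeff_le hm hη hηb)
      (by positivity : 0 ≤ L ^ 2 * (1 - 1 / K) * d)
    linarith
  refine (lintegral_enorm_prlmcMap_sq_le hU hη.le hηL (α := m * η / 2) (by positivity) x).trans ?_
  rw [← mul_assoc, ← ENNReal.ofReal_mul (by positivity), ← ENNReal.ofReal_mul (by positivity),
    add_assoc, ← ENNReal.ofReal_add (by positivity) (by positivity)]
  gcongr

lemma sqrt_contraction_factor_lt_one (hm : 0 < m) (hL : 0 < L) (hη : 0 < η)
    (hηb : η ≤ prlmcStepBound m L) :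
    NNReal.sqrt (1 - 2 * m * η + 21 * L ^ 2 * η ^ 2).toNNReal < 1 := by
  have hmη : 0 < m * η := by positivity
  rw [← NNReal.sqrt_one, NNReal.sqrt_lt_sqrt, Real.toNNReal_lt_one]
  linarith [contraction_factor_le hL hη.le hηb]

lemma lintegral_enorm_sq_le_of_invariant_prlmc [NeZero K] (hU : StrongAssumption U m L)
    (hη : 0 < η) (hηb : η ≤ prlmcStepBound m L) {μ : Measure (Euc d)}
    [IsProbabilityMeasure μ] (hμ : MemLp id 2 μ)
    (hinv : (randomMapKernel (prlmcNoise d K) (prlmcMap U η K)).Invariant μ) :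
    ∫⁻ x, ‖x‖ₑ ^ 2 ∂μ ≤ ENNReal.ofReal (d / m * (2 + L ^ 2 * (1 - 1 / K))) := by
  have hm : 0 < m := hU.2.1
  have hmη : m * η ≤ 1 := by
    have := mul_le_one_of_le_prlmcStepBound (hm.trans_le hU.2.2.1) hU.2.2.1 hηb
    linarith [mul_le_mul_of_nonneg_left hU.2.2.1 hη.le]
  have hmeas := measurable_prlmcMap hU η K
  have hfin : ∫⁻ x, ‖x‖ₑ ^ 2 ∂μ ≠ ∞ := by
    rw [← eLpNorm_two_sq_eq_lintegral_enorm_sq μ fun x => x]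
    exact ENNReal.pow_ne_top hμ.2.ne
  have hdrift (x : Euc d) :
      ∫⁻ y, ‖y‖ₑ ^ 2 ∂randomMapKernel (prlmcNoise d K) (prlmcMap U η K) x
        ≤ ENNReal.ofReal (1 - m * η) * ‖x‖ₑ ^ 2
          + ENNReal.ofReal (η * (d * (2 + L ^ 2 * (1 - 1 / K)))) := by
    rw [randomMapKernel_apply hmeas, lintegral_map (by fun_prop) hmeas.of_uncurry_left]
    exact lintegral_enorm_prlmcMap_sq_le_drift hU hη hηb x
  have hlt : ENNReal.ofReal (1 - m * η) < 1 := by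
    rw [ENNReal.ofReal_lt_one]
    linarith [mul_pos hm hη]
  refine (lintegral_le_of_invariant_of_drift hinv (by fun_prop) hfin hlt hdrift).trans_eq ?_
  rw [← ENNReal.ofReal_one, ← ENNReal.ofReal_sub _ (by linarith), sub_sub_cancel,
    ← ENNReal.ofReal_div_of_pos (by positivity)]
  congr 1
  field_simp

end SmallStep

end PRLMC

/-- Under Assumption 1 there is a threshold `η₀ ∈ (0,1)` depending only on
`m` and `L` such that for every `η ∈ (0, η₀)` the PRLMC chain admits a unique stationary
distribution `π_η`, whose second moment is bounded by
`(d/m) (2 + 4η²L²(2 − 1/K) + L²(1 − 1/K))`. -/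
theorem stmt0 (m L : ℝ) (hm : 0 < m) (hmL : m ≤ L) :
    ∃ η₀ : ℝ, η₀ ∈ Set.Ioo (0 : ℝ) 1 ∧
      ∀ (d K : ℕ), 1 ≤ K → ∀ U : Euc d → ℝ, StrongAssumption U m L →
        ∀ η : ℝ, η ∈ Set.Ioo (0 : ℝ) η₀ →
          ∃ πη : Measure (Euc d), IsProbabilityMeasure πη ∧
            πη.bind (prlmcKernel U η K) = πη ∧
            (∀ μ : Measure (Euc d), IsProbabilityMeasure μ →
              μ.bind (prlmcKernel U η K) = μ → μ = πη) ∧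
            ∫⁻ x, (‖x‖₊ : ℝ≥0∞) ^ 2 ∂πη ≤
              ENNReal.ofReal (((d : ℝ) / m) *
                (2 + 4 * η ^ 2 * L ^ 2 * (2 - 1 / (K : ℝ)) + L ^ 2 * (1 - 1 / (K : ℝ)))) := by
  have hL : 0 < L := hm.trans_le hmL
  refine ⟨prlmcStepBound m L, prlmcStepBound_mem_Ioo hm hL, fun d K hK U hU η ⟨hη, hηb⟩ => ?_⟩
  have : NeZero K := NeZero.of_pos hK
  have hηL : η * L ≤ 1 := mul_le_one_of_le_prlmcStepBound hL hmL hηb.le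
  have hmeas := measurable_prlmcMap hU η K
  have hcontract := prlmcMap_contractsInLp (K := K) hU hη.le hηL
  have hρ := sqrt_contraction_factor_lt_one hm hL hη hηb.le
  obtain ⟨π, hπ, hπ₂, hinv⟩ := hcontract.exists_invariant hmeas ENNReal.ofNat_ne_top hρ
    (memLp_prlmcMap hU hη.le hηL 0)
  have := isMarkovKernel_randomMapKernel (P := prlmcNoise d K) hmeas
  rw [prlmcKernel_eq_randomMapKernel hU]
  refine ⟨π, hπ, hinv, fun μ hμ hμinv =>
    (hcontract.contractsLipschitz hmeas one_le_two).invariant_unique hρ hμinv hinv, ?_⟩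
  refine (lintegral_enorm_sq_le_of_invariant_prlmc hU hη hηb.le hπ₂ hinv).trans ?_
  have hKinv : 1 / (K : ℝ) ≤ 1 := by
    rw [div_le_one (by positivity)]; exact_mod_cast hK
  gcongr
  have : 0 ≤ 4 * η ^ 2 * L ^ 2 * (2 - 1 / (K : ℝ)) := mul_nonneg (by positivity) (by linarith)
  linarith

end
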